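/- arXiv:0909.5079 — 5 statements merged into one kernel-verified Lean document; each statement's English description precedes it below -/
import Mathlib

section
/- Assume properties (CAS) and (DCP). Then lim_{p→∞} sup{ ‖A(ι v) − A_{W_p}(ι v)‖_V : v ∈ W_p, ‖v‖_V = 1 } = 0 (with the convention that the supremum over the empty set is 0). (Abstract form of Lemma 3 of the paper: completeness of approximating subspaces plus discrete compactness imply uniform norm convergence of the discrete solution operators to the continuous solution operator on the discrete spaces.) -/
/-!
If `k ∈ ker d` then `⟪k, v⟫ = ⟪ι k, ι v⟫` for all `v`, so `A (ι k) = k`, and for `k ∈ W p` both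
solution operators reproduce `k` exactly. Hence, splitting `v ∈ W p` as `v = k + z` with `k` the
`V`-orthogonal projection of `v` onto `W p ∩ ker d`, only the component `z`, which is discretely
divergence-free, contributes to the error. As `A f - A_W f` is `V`-orthogonal to `W` (Galerkin
orthogonality), the error is at most the distance from `A (ι z)` to `W p`, and this is at most
`‖ι z - L‖ + dist (A L, W p)` for every `L : H`, because `A` is a contraction
(`error_le_of_splitting`).

If the suprema did not tend to zero, there would be unit vectors along a subsequence with error
bounded below. Discrete compactness makes their components `ι z` converge to some `L`
along a further subsequence, and (CAS) for the single vector `A L` then forces the error to zero.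
-/

open Filter Topology RealInnerProductSpace

/-- Each `v ∈ W` has a component `z ∈ W` whose image under `ι` is orthogonal to `ι (W ∩ ker d)`,
with `‖z‖ ≤ ‖v‖`, that controls the Galerkin error of `ι v`: up to the best approximation error of
any fixed `A L`, the error is bounded by the distance from `ι z` to `L`. -/
lemma error_le_of_splitting
    {V H H' : Type*}
    [NormedAddCommGroup V] [InnerProductSpace ℝ V]
    [NormedAddCommGroup H] [InnerProductSpace ℝ H]
    [NormedAddCommGroup H'] [InnerProductSpace ℝ H']
    (ι : V →L[ℝ] H) (d : V →L[ℝ] H')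
    (hinner : ∀ u v : V, ⟪u, v⟫ = ⟪d u, d v⟫ + ⟪ι u, ι v⟫)
    (A : H → V) (hA : ∀ (f : H) (v : V), ⟪A f, v⟫ = ⟪f, ι v⟫)
    (W : Submodule ℝ V) [FiniteDimensional ℝ W]
    (AW : H → V) (hAWmem : ∀ f, AW f ∈ W)
    (hAW : ∀ f : H, ∀ w ∈ W, ⟪AW f, w⟫ = ⟪f, ι w⟫)
    (v : V) (hv : v ∈ W) :
    ∃ z ∈ W, (∀ y ∈ W, d y = 0 → ⟪ι z, ι y⟫ = 0) ∧ ‖z‖ ≤ ‖v‖ ∧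
      ∀ L : H, ‖A (ι v) - AW (ι v)‖ ≤
        ‖ι z - L‖ + sInf { r : ℝ | ∃ w ∈ W, r = ‖A L - w‖ } := by
  have hι_le : ∀ u : V, ‖ι u‖ ≤ ‖u‖ := by
    intro u
    have h := hinner u u
    simp only [real_inner_self_eq_norm_sq] at h
    nlinarith [sq_nonneg ‖d u‖, norm_nonneg u, norm_nonneg (ι u)]
  have hA_contr : ∀ f g : H, ‖A f - A g‖ ≤ ‖f - g‖ := by
    intro f g
    have h1 : ‖A f - A g‖ ^ 2 ≤ ‖f - g‖ * ‖A f - A g‖ := by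
      calc ‖A f - A g‖ ^ 2 = ⟪A f - A g, A f - A g⟫ := (real_inner_self_eq_norm_sq _).symm
        _ = ⟪f - g, ι (A f - A g)⟫ := by
          rw [inner_sub_left, hA, hA, ← inner_sub_left]
        _ ≤ ‖f - g‖ * ‖ι (A f - A g)‖ := real_inner_le_norm _ _
        _ ≤ ‖f - g‖ * ‖A f - A g‖ := by gcongr; exact hι_le _
    by_contra! hlt
    nlinarith [norm_nonneg (f - g)]
  -- Galerkin orthogonality yields the best approximation property.
  have hbest : ∀ f : H, ∀ w ∈ W, ‖A f - AW f‖ ≤ ‖A f - w‖ := by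
    intro f w hw
    have h0 : ⟪A f - AW f, AW f - w⟫ = 0 := by
      rw [inner_sub_left, hA, hAW f _ (W.sub_mem (hAWmem f) hw), sub_self]
    have h1 := norm_add_sq_eq_norm_sq_add_norm_sq_of_inner_eq_zero _ _ h0
    rw [sub_add_sub_cancel] at h1
    nlinarith [norm_nonneg (A f - w), norm_nonneg (A f - AW f), mul_self_nonneg ‖AW f - w‖]
  let K : Submodule ℝ V := W ⊓ d.ker
  have : FiniteDimensional ℝ K := Submodule.finiteDimensional_of_le inf_le_left
  set k : V := K.starProjection v with hk
  have hkK : k ∈ K := K.starProjection_apply_mem v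
  have hkW : k ∈ W := hkK.1
  have hdk : d k = 0 := hkK.2
  have horth : ∀ y ∈ K, ⟪v - k, y⟫ = 0 := K.starProjection_inner_eq_zero v
  refine ⟨v - k, W.sub_mem hv hkW, ?_, ?_, ?_⟩
  · intro y hy hdy
    have h := hinner (v - k) y
    rw [horth y ⟨hy, hdy⟩, hdy, inner_zero_right, zero_add] at h
    exact h.symm
  · have h1 := norm_add_sq_eq_norm_sq_add_norm_sq_of_inner_eq_zero _ _ (horth k hkK)
    rw [sub_add_cancel] at h1
    nlinarith [norm_nonneg v, norm_nonneg (v - k), mul_self_nonneg ‖k‖]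
  · intro L
    have hAv : A (ι v) = k + A (ι (v - k)) := by
      refine ext_inner_right ℝ fun y => ?_
      rw [inner_add_left, hA, hA, hinner k y, hdk, inner_zero_left, zero_add, ← inner_add_left,
        ← map_add, add_sub_cancel]
    rw [← sub_le_iff_le_add']
    refine le_csInf ⟨_, 0, W.zero_mem, rfl⟩ ?_
    rintro r ⟨w, hw, rfl⟩
    rw [sub_le_iff_le_add']
    calc ‖A (ι v) - AW (ι v)‖ ≤ ‖A (ι v) - (k + w)‖ := hbest _ _ (W.add_mem hkW hw)
      _ = ‖(A (ι (v - k)) - A L) + (A L - w)‖ := by rw [hAv]; congr 1; abel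
      _ ≤ ‖A (ι (v - k)) - A L‖ + ‖A L - w‖ := norm_add_le _ _
      _ ≤ ‖ι (v - k) - L‖ + ‖A L - w‖ := by gcongr; exact hA_contr _ _

/-- (CAS) + discrete compactness imply uniform norm convergence of the
discrete solution operators to the continuous solution operator on the discrete spaces. -/
theorem cas_dcp_imp_operator_convergence
    {V H H' : Type*}
    [NormedAddCommGroup V] [InnerProductSpace ℝ V] [CompleteSpace V]
    [NormedAddCommGroup H] [InnerProductSpace ℝ H] [CompleteSpace H]
    [NormedAddCommGroup H'] [InnerProductSpace ℝ H'] [CompleteSpace H']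
    (ι : V →L[ℝ] H) (hι : Function.Injective ι) (d : V →L[ℝ] H')
    (hinner : ∀ u v : V, ⟪u, v⟫ = ⟪d u, d v⟫ + ⟪ι u, ι v⟫)
    -- the continuous solution operator
    (A : H → V) (hA : ∀ (f : H) (v : V), ⟪A f, v⟫ = ⟪f, ι v⟫)
    -- the discrete spaces
    (W : ℕ → Submodule ℝ V) (hWfin : ∀ p, FiniteDimensional ℝ (W p))
    -- the discrete solution operators
    (AW : ℕ → H → V) (hAWmem : ∀ p f, AW p f ∈ W p)
    (hAW : ∀ (p : ℕ) (f : H), ∀ w ∈ W p, ⟪AW p f, w⟫ = ⟪f, ι w⟫)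
    -- property (CAS)
    (hCAS : ∀ v : V,
      Tendsto (fun p => sInf { r : ℝ | ∃ w ∈ W p, r = ‖v - w‖ }) atTop (𝓝 0))
    -- the discrete compactness property
    (hDCP : ∀ pseq : ℕ → ℕ, StrictMono pseq → ∀ u : ℕ → V,
      (∀ m, u m ∈ W (pseq m) ∧
        ∀ z ∈ W (pseq m), d z = 0 → ⟪ι (u m), ι z⟫ = 0) →
      (∀ m, ‖u m‖ ≤ 1) →
      ∃ φ : ℕ → ℕ, StrictMono φ ∧ ∃ L : H,
        Tendsto (fun m => ι (u (φ m))) atTop (𝓝 L)) :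
    Tendsto
      (fun p => sSup { r : ℝ | ∃ v ∈ W p, ‖v‖ = 1 ∧ r = ‖A (ι v) - AW p (ι v)‖ })
      atTop (𝓝 0) := by
  by_contra hcon
  have hnonneg : ∀ p, 0 ≤ sSup { r : ℝ | ∃ v ∈ W p, ‖v‖ = 1 ∧ r = ‖A (ι v) - AW p (ι v)‖ } := by
    intro p
    refine Real.sSup_nonneg ?_
    rintro r ⟨v, -, -, rfl⟩
    exact norm_nonneg _
  obtain ⟨ε, hε, hfreq⟩ : ∃ ε > 0, ∃ᶠ p in atTop,
      ε ≤ sSup { r : ℝ | ∃ v ∈ W p, ‖v‖ = 1 ∧ r = ‖A (ι v) - AW p (ι v)‖ } := by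
    rw [Metric.tendsto_nhds] at hcon
    push Not at hcon
    obtain ⟨ε, hε, h⟩ := hcon
    refine ⟨ε, hε, h.mono fun p hp => ?_⟩
    rwa [Real.dist_0_eq_abs, abs_of_nonneg (hnonneg p)] at hp
  obtain ⟨pseq, hmono, hp⟩ := extraction_of_frequently_atTop hfreq
  have hex : ∀ m, ∃ v ∈ W (pseq m), ‖v‖ = 1 ∧
      ε / 2 < ‖A (ι v) - AW (pseq m) (ι v)‖ := by
    intro m
    -- The supremum of the empty set is `0 < ε`, so the set is nonempty.
    have hne : { r : ℝ | ∃ v ∈ W (pseq m), ‖v‖ = 1 ∧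
        r = ‖A (ι v) - AW (pseq m) (ι v)‖ }.Nonempty := by
      by_contra hemp
      have h := hp m
      rw [Set.not_nonempty_iff_eq_empty.mp hemp, Real.sSup_empty] at h
      linarith
    obtain ⟨r, ⟨v, hv, hv1, rfl⟩, hr⟩ := exists_lt_of_lt_csSup hne
      (lt_of_lt_of_le (half_lt_self hε) (hp m))
    exact ⟨v, hv, hv1, hr⟩
  choose v hvW hv1 hverr using hex
  have hsplit := fun m => by
    have := hWfin (pseq m)
    exact error_le_of_splitting ι d hinner A hA (W (pseq m)) (AW (pseq m)) (hAWmem _) (hAW _)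
      (v m) (hvW m)
  choose z hzW hzorth hznorm hzerr using hsplit
  obtain ⟨φ, hφ, L, hL⟩ := hDCP pseq hmono z (fun m => ⟨hzW m, hzorth m⟩)
    (fun m => (hznorm m).trans_eq (hv1 m))
  have h1 := (tendsto_iff_norm_sub_tendsto_zero.mp hL).add
    ((hCAS (A L)).comp (hmono.comp hφ).tendsto_atTop)
  rw [add_zero] at h1
  obtain ⟨m, hm⟩ := (h1.eventually_lt_const (half_pos hε)).exists
  exact absurd (hm.trans (hverr (φ m))) (not_lt.mpr (hzerr (φ m) L))
end

section
/- Assume properties (CDK) and (DCP). Then there exists α > 0 such that for all p ∈ ℕ and all v ∈ Z_p, ‖d v‖_{H'} ≥ α ‖ι v‖_H. (Abstract form of Lemma 4 of the paper: completeness of discrete kernels plus discrete compactness imply the discrete Friedrichs inequality, uniformly in p.) -/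
/-!
For a single `p` the inequality is finite-dimensional: `d` is injective on `Z_p`, because an element
of `Z_p` killed by `d` lies in `K_p` and is therefore `H`-orthogonal to itself.

Uniformity in `p` is a compactness argument. If no constant works, then (having settled any finite
set of indices) there are `V`-unit vectors `u_n ∈ Z_{p_n}`, with `p_n` strictly increasing, such that
`d u_n → 0`. By discrete compactness a subsequence of `ι u_n` converges in `H`; since the norm of `V`
is equivalent to the norm of the pair `(d u, ι u)`, that subsequence converges in `V` to a unit
vector `w` with `d w = 0`. By completeness of the discrete kernels, `ι w` is a limit of
elements of `ι K_{p_n}`, to which `ι u_n` is orthogonal, so `⟪ι w, ι w⟫ = lim ⟪ι u_n, ι w⟫ = 0`.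
This contradicts `‖w‖ = 1`.
-/

open Filter Topology RealInnerProductSpace

section Helpers

variable {V H H' : Type*}
    [NormedAddCommGroup V] [InnerProductSpace ℝ V]
    [NormedAddCommGroup H] [InnerProductSpace ℝ H]
    [NormedAddCommGroup H'] [InnerProductSpace ℝ H']

lemma graph_norm_sq (ι : V →L[ℝ] H) (d : V →L[ℝ] H')
    (hinner : ∀ u v : V, ⟪u, v⟫ = ⟪d u, d v⟫ + ⟪ι u, ι v⟫) (u : V) :
    ‖u‖ ^ 2 = ‖d u‖ ^ 2 + ‖ι u‖ ^ 2 := by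
  simpa only [real_inner_self_eq_norm_sq] using hinner u u

lemma graph_norm_le (ι : V →L[ℝ] H) (d : V →L[ℝ] H')
    (hinner : ∀ u v : V, ⟪u, v⟫ = ⟪d u, d v⟫ + ⟪ι u, ι v⟫) (u : V) : ‖ι u‖ ≤ ‖u‖ := by
  have h := graph_norm_sq ι d hinner u
  exact le_of_sq_le_sq (by nlinarith [sq_nonneg ‖d u‖]) (norm_nonneg _)

/-- Completeness of `V` makes the graph `{(d u, ι u)}` closed in `H' × H`. -/
lemma graph_isClosedEmbedding [CompleteSpace V] (ι : V →L[ℝ] H) (d : V →L[ℝ] H')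
    (hinner : ∀ u v : V, ⟪u, v⟫ = ⟪d u, d v⟫ + ⟪ι u, ι v⟫) :
    IsClosedEmbedding (d.prod ι) := by
  have hanti : AntilipschitzWith 2 (d.prod ι) := by
    refine AddMonoidHomClass.antilipschitz_of_bound _ fun u => ?_
    have h := graph_norm_sq ι d hinner u
    -- the product carries the sup norm
    have h1 : ‖d u‖ ≤ ‖(d.prod ι) u‖ := norm_fst_le ((d.prod ι) u)
    have h2 : ‖ι u‖ ≤ ‖(d.prod ι) u‖ := norm_snd_le ((d.prod ι) u)
    refine le_of_sq_le_sq ?_ (by positivity)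
    rw [NNReal.coe_ofNat, h]
    nlinarith [pow_le_pow_left₀ (norm_nonneg _) h1 2, pow_le_pow_left₀ (norm_nonneg _) h2 2,
      sq_nonneg ‖(d.prod ι) u‖]
  exact hanti.isClosedEmbedding (d.prod ι).uniformContinuous

/-- The Friedrichs inequality on a single finite-dimensional space. -/
lemma friedrichs_single (ι : V →L[ℝ] H) (hι : Function.Injective ι) (d : V →L[ℝ] H')
    (hinner : ∀ u v : V, ⟪u, v⟫ = ⟪d u, d v⟫ + ⟪ι u, ι v⟫)
    (W : Submodule ℝ V) (hW : FiniteDimensional ℝ W) :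
    ∃ α > (0 : ℝ), ∀ v ∈ W, (∀ z ∈ W, d z = 0 → ⟪ι v, ι z⟫ = 0) → α * ‖ι v‖ ≤ ‖d v‖ := by
  let Z : Submodule ℝ W :=
    { carrier := {v | ∀ z ∈ W, d z = 0 → ⟪ι v, ι z⟫ = 0}
      zero_mem' := by intro z _ _; simp
      add_mem' := by
        intro a b ha hb z hz hdz
        simp [inner_add_left, ha z hz hdz, hb z hz hdz]
      smul_mem' := by
        intro c a ha z hz hdz
        simp [real_inner_smul_left, ha z hz hdz] }
  let f : Z →ₗ[ℝ] H' := d.toLinearMap ∘ₗ W.subtype ∘ₗ Z.subtype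
  have hf : LinearMap.ker f = ⊥ := by
    rw [LinearMap.ker_eq_bot']
    intro v hv
    have h0 : ⟪ι (v : W), ι (v : W)⟫ = 0 := v.2 _ v.1.2 hv
    have h1 : ι ((v : W) : V) = ι 0 := by simpa using h0
    exact Subtype.ext (Subtype.ext (hι h1))
  obtain ⟨K, hK, hanti⟩ := f.exists_antilipschitzWith hf
  have hK' : (0 : ℝ) < K := hK
  refine ⟨(K : ℝ)⁻¹, inv_pos.2 hK', fun v hv hvZ => ?_⟩
  have h : ‖v‖ ≤ K * ‖d v‖ := by
    simpa [f] using hanti.le_mul_dist (⟨⟨v, hv⟩, hvZ⟩ : Z) 0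
  rw [inv_mul_le_iff₀ hK']
  exact (graph_norm_le ι d hinner v).trans h

end Helpers

/-- (CDK) + discrete compactness imply the discrete Friedrichs
inequality, uniformly in `p`. -/
theorem cdk_dcp_imp_discrete_friedrichs
    {V H H' : Type*}
    [NormedAddCommGroup V] [InnerProductSpace ℝ V] [CompleteSpace V]
    [NormedAddCommGroup H] [InnerProductSpace ℝ H] [CompleteSpace H]
    [NormedAddCommGroup H'] [InnerProductSpace ℝ H'] [CompleteSpace H']
    (ι : V →L[ℝ] H) (hι : Function.Injective ι) (d : V →L[ℝ] H')
    (hinner : ∀ u v : V, ⟪u, v⟫ = ⟪d u, d v⟫ + ⟪ι u, ι v⟫)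
    -- the discrete spaces
    (W : ℕ → Submodule ℝ V) (hWfin : ∀ p, FiniteDimensional ℝ (W p))
    -- property (CDK)
    (hCDK : ∀ z : V, d z = 0 →
      Tendsto (fun p => sInf { r : ℝ | ∃ zp ∈ W p, d zp = 0 ∧ r = ‖ι z - ι zp‖ })
        atTop (𝓝 0))
    -- the discrete compactness property
    (hDCP : ∀ pseq : ℕ → ℕ, StrictMono pseq → ∀ u : ℕ → V,
      (∀ m, u m ∈ W (pseq m) ∧
        ∀ z ∈ W (pseq m), d z = 0 → ⟪ι (u m), ι z⟫ = 0) →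
      (∀ m, ‖u m‖ ≤ 1) →
      ∃ φ : ℕ → ℕ, StrictMono φ ∧ ∃ L : H,
        Tendsto (fun m => ι (u (φ m))) atTop (𝓝 L)) :
    ∃ α > (0 : ℝ), ∀ p : ℕ, ∀ v ∈ W p,
      (∀ z ∈ W p, d z = 0 → ⟪ι v, ι z⟫ = 0) →
      α * ‖ι v‖ ≤ ‖d v‖ := by
  classical
  choose a ha hasingle using fun p => friedrichs_single ι hι d hinner (W p) (hWfin p)
  by_contra hcon
  push Not at hcon
  -- any uniform bound fails at arbitrarily large `p`
  have hbad : ∀ (ε : ℝ), 0 < ε → ∀ N : ℕ, ∃ p ≥ N, ∃ u ∈ W p,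
      (∀ z ∈ W p, d z = 0 → ⟪ι u, ι z⟫ = 0) ∧ ‖u‖ = 1 ∧ ‖d u‖ ≤ ε := by
    intro ε hε N
    obtain ⟨α, hα, hαε, hαa⟩ : ∃ α > (0 : ℝ), α ≤ ε ∧ ∀ p < N, α ≤ a p := by
      induction N with
      | zero => exact ⟨ε, hε, le_rfl, by simp⟩
      | succ N ih =>
        obtain ⟨α, h1, h2, h3⟩ := ih
        refine ⟨min α (a N), lt_min h1 (ha N), (min_le_left _ _).trans h2, fun p hp => ?_⟩
        rcases Nat.lt_succ_iff_lt_or_eq.1 hp with h | rfl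
        · exact (min_le_left _ _).trans (h3 p h)
        · exact min_le_right _ _
    obtain ⟨p, v, hv, hvZ, hlt⟩ := hcon α hα
    have hpN : N ≤ p := by
      by_contra! h
      have := hasingle p v hv hvZ
      nlinarith [hαa p h, norm_nonneg (ι v)]
    have hvpos : 0 < ‖v‖ := by
      refine norm_pos_iff.2 fun h => ?_
      simp [h] at hlt
    refine ⟨p, hpN, ‖v‖⁻¹ • v, (W p).smul_mem _ hv, fun z hz hdz => ?_, ?_, ?_⟩
    · simp [real_inner_smul_left, hvZ z hz hdz]
    · rw [norm_smul, norm_inv, norm_norm, inv_mul_cancel₀ hvpos.ne']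
    · rw [map_smul, norm_smul, norm_inv, norm_norm, inv_mul_le_iff₀ hvpos]
      nlinarith [graph_norm_le ι d hinner v]
  choose! P hPge U hUW hUZ hU1 hUd using fun n : ℕ =>
    hbad (1 / ((n : ℝ) + 1)) (by positivity)
  -- each index is chosen above the previous one
  let q : ℕ → ℕ := fun n => Nat.rec (P 0 0) (fun k r => P (k + 1) (r + 1)) n
  let N : ℕ → ℕ := fun n => Nat.casesOn n 0 (fun k => q k + 1)
  have hqN : ∀ n, q n = P n (N n) := by rintro (_ | n) <;> rfl
  have hq : StrictMono q := strictMono_nat_of_lt_succ fun n => hPge (n + 1) (q n + 1)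
  set u : ℕ → V := fun n => U n (N n) with hu
  obtain ⟨φ, hφ, L, hL⟩ := hDCP q hq u
    (fun m => by rw [hqN]; exact ⟨hUW _ _, hUZ _ _⟩) (fun m => (hU1 _ _).le)
  have hd0 : Tendsto (fun m => d (u (φ m))) atTop (𝓝 0) :=
    (squeeze_zero_norm (fun n => hUd n (N n)) tendsto_one_div_add_atTop_nhds_zero_nat).comp
      hφ.tendsto_atTop
  have hcl := graph_isClosedEmbedding ι d hinner
  have hpair : Tendsto (fun m => (d.prod ι) (u (φ m))) atTop (𝓝 (0, L)) :=
    hd0.prodMk_nhds hL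
  obtain ⟨w, hw⟩ := hcl.isClosed_range.mem_of_tendsto hpair
    (Eventually.of_forall fun m => Set.mem_range_self _)
  have hdw : d w = 0 := congrArg Prod.fst hw
  have huw : Tendsto (fun m => u (φ m)) atTop (𝓝 w) := by
    rw [hcl.isInducing.tendsto_nhds_iff, hw]
    exact hpair
  have hw1 : ‖w‖ = 1 :=
    tendsto_nhds_unique huw.norm (by simp only [hu, hU1]; exact tendsto_const_nhds)
  have hlim : Tendsto (fun m => ⟪ι (u (φ m)), ι w⟫) atTop (𝓝 ⟪ι w, ι w⟫) :=
    ((ι.continuous.tendsto w).comp huw).inner tendsto_const_nhds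
  -- by orthogonality, `ι u` sees only the distance from `ι w` to the discrete kernel
  have hlim0 : Tendsto (fun m => ⟪ι (u (φ m)), ι w⟫) atTop (𝓝 0) := by
    refine squeeze_zero_norm (fun m => ?_)
      ((hCDK w hdw).comp (hq.tendsto_atTop.comp hφ.tendsto_atTop))
    refine le_csInf ⟨_, 0, (W _).zero_mem, map_zero d, rfl⟩ ?_
    rintro r ⟨z, hz, hdz, rfl⟩
    have hz' : z ∈ W (q (φ m)) := hz
    rw [hqN] at hz'
    have horth : ⟪ι (u (φ m)), ι z⟫ = 0 := hUZ _ _ z hz' hdz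
    have hle : ‖ι (u (φ m))‖ ≤ 1 := (graph_norm_le ι d hinner _).trans_eq (hU1 _ _)
    calc ‖⟪ι (u (φ m)), ι w⟫‖ = ‖⟪ι (u (φ m)), ι w - ι z⟫‖ := by
          rw [inner_sub_right, horth, sub_zero]
      _ ≤ ‖ι (u (φ m))‖ * ‖ι w - ι z‖ := norm_inner_le_norm _ _
      _ ≤ ‖ι w - ι z‖ := mul_le_of_le_one_left (norm_nonneg _) hle
  have hzero : ⟪ι w, ι w⟫ = 0 := tendsto_nhds_unique hlim hlim0
  have hnorm := hinner w w
  rw [hdw, hzero, real_inner_self_eq_norm_sq, hw1] at hnorm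
  simp at hnorm
end

section
/- Global projection error estimate (Lemma 5 of the paper): for every p ∈ ℕ and every u ∈ X̃_p one has ‖j(u − π_p u)‖_H ≤ ε(p) ‖R‖ ‖u‖_X; in particular there is a constant C > 0 independent of p such that ‖j(u − π_p u)‖_H ≤ C ε(p) ‖u‖_X for all u ∈ X̃_p and all p. -/
/-! For `u ∈ X̃_p` the homotopy identity splits `u = e (R u) + R' (D u)`, and compatibility of the
lifting puts `R' (D u)` into `W_p`, where `π_p` is the identity. By the commuting diagram property
the error is therefore that of the potential, `u - π_p u = e (R u - π'_p (R u))`, and the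
approximation property together with the boundedness of `R` gives the estimate. -/

open Filter Topology RealInnerProductSpace

/-- Global projection error estimate (Lemma 5 of the paper):
for `u ∈ X̃_p` one has `‖j (u - π_p u)‖_H ≤ ε p * ‖R‖ * ‖u‖_X`; in particular there is
a constant `C > 0` independent of `p` with `‖j (u - π_p u)‖_H ≤ C * ε p * ‖u‖_X`. -/
theorem global_projection_error_estimate
    {H G X S : Type*}
    [NormedAddCommGroup H] [InnerProductSpace ℝ H] [CompleteSpace H]
    [NormedAddCommGroup G] [InnerProductSpace ℝ G] [CompleteSpace G]
    [NormedAddCommGroup X] [InnerProductSpace ℝ X] [CompleteSpace X]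
    [NormedAddCommGroup S] [InnerProductSpace ℝ S] [CompleteSpace S]
    (j : X →L[ℝ] H) (D : X →L[ℝ] G) (e : S →L[ℝ] X)
    (hDe : ∀ φ : S, D (e φ) = 0)
    -- lifting operators and the homotopy identity
    (R : X →L[ℝ] S) (R' : G →L[ℝ] X)
    (hhom : ∀ u : X, e (R u) + R' (D u) = u)
    -- discrete spaces
    (W : ℕ → Submodule ℝ X) (hWfin : ∀ p, FiniteDimensional ℝ (W p))
    (W' : ℕ → Submodule ℝ S) (hW'fin : ∀ p, FiniteDimensional ℝ (W' p))
    (heW : ∀ p : ℕ, ∀ φ ∈ W' p, e φ ∈ W p)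
    -- compatibility of the lifting with the discrete spaces
    (hRW : ∀ p : ℕ, ∀ w ∈ W p, R' (D w) ∈ W p)
    -- projections
    (π' : ℕ → S →ₗ[ℝ] S) (hπ'mem : ∀ p φ, π' p φ ∈ W' p)
    (hπ'proj : ∀ p : ℕ, ∀ φ ∈ W' p, π' p φ = φ)
    (π : ℕ → X →ₗ[ℝ] X) (hπmem : ∀ p u, π p u ∈ W p)
    (hπproj : ∀ p : ℕ, ∀ w ∈ W p, π p w = w)
    (hcomm : ∀ (p : ℕ) (φ : S), π p (e φ) = e (π' p φ))
    -- approximation property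
    (ε : ℕ → ℝ) (hεpos : ∀ p, 0 < ε p) (hε : Tendsto ε atTop (𝓝 0))
    (happrox : ∀ (p : ℕ) (φ : S), ‖j (e (φ - π' p φ))‖ ≤ ε p * ‖φ‖) :
    (∀ p : ℕ, ∀ u : X, (∃ w ∈ W p, D u = D w) →
      ‖j (u - π p u)‖ ≤ ε p * ‖R‖ * ‖u‖) ∧
    (∃ C > (0 : ℝ), ∀ p : ℕ, ∀ u : X, (∃ w ∈ W p, D u = D w) →
      ‖j (u - π p u)‖ ≤ C * ε p * ‖u‖) := by
  have key : ∀ p : ℕ, ∀ u : X, (∃ w ∈ W p, D u = D w) →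
      ‖j (u - π p u)‖ ≤ ε p * ‖R‖ * ‖u‖ := by
    rintro p u ⟨w, hw, hDw⟩
    have hmem : R' (D u) ∈ W p := hDw ▸ hRW p w hw
    have herr : u - π p u = e (R u - π' p (R u)) := by
      have hπu : π p u = e (π' p (R u)) + R' (D u) := by
        conv_lhs => rw [← hhom u]
        rw [map_add, hcomm, hπproj p _ hmem]
      rw [hπu, map_sub, eq_sub_of_add_eq (hhom u)]
      abel
    calc ‖j (u - π p u)‖ ≤ ε p * ‖R u‖ := herr ▸ happrox p (R u)
      _ ≤ ε p * (‖R‖ * ‖u‖) :=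
        mul_le_mul_of_nonneg_left (R.le_opNorm u) (hεpos p).le
      _ = ε p * ‖R‖ * ‖u‖ := (mul_assoc _ _ _).symm
  -- `‖R‖` may vanish, so `‖R‖ + 1` serves as the positive constant.
  refine ⟨key, ‖R‖ + 1, by positivity, fun p u hu => (key p u hu).trans ?_⟩
  have : 0 ≤ ε p * ‖u‖ := mul_nonneg (hεpos p).le (norm_nonneg u)
  linarith
end

section
/- Nédélec's trick (orthogonality identity (3.24)–(3.25) in the proof of Theorem 6 of the paper): fix p ∈ ℕ and suppose u ∈ W_p satisfies ⟨j u, j(e ψ)⟩_H = 0 for all ψ ∈ W'_p, and ũ ∈ X satisfies ũ − u = e σ for some σ ∈ S and ⟨j ũ, j(e φ)⟩_H = 0 for all φ ∈ S. Then π_p ũ − u = e(π'_p σ) ∈ e(W'_p), the orthogonality ⟨j(ũ − u), j(π_p ũ − u)⟩_H = 0 holds, and consequently ‖j(ũ − u)‖_H ≤ ‖j(ũ − π_p ũ)‖_H. -/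
/-!
Since `π p` fixes `u ∈ W p` and commutes with `e`, applying it to `ut - u = e σ` gives
`π p ut - u = e (π' p σ)`. Both `j ut` and `j u` are orthogonal to `j (e (π' p σ))`, hence so is
their difference, and Pythagoras turns this orthogonality into the best-approximation estimate.
-/

open Filter Topology RealInnerProductSpace

/-- Nédélec's trick: if `u ∈ W_p` is `H`-orthogonal to `e (W'_p)`,
`ut - u = e σ`, and `j ut` is `H`-orthogonal to all `j (e φ)`, then
`π_p ut - u = e (π'_p σ) ∈ e (W'_p)`, one has the orthogonality
`⟪j (ut - u), j (π_p ut - u)⟫ = 0`, and consequently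
`‖j (ut - u)‖ ≤ ‖j (ut - π_p ut)‖`. -/
theorem nedelec_trick
    {H G X S : Type*}
    [NormedAddCommGroup H] [InnerProductSpace ℝ H] [CompleteSpace H]
    [NormedAddCommGroup G] [InnerProductSpace ℝ G] [CompleteSpace G]
    [NormedAddCommGroup X] [InnerProductSpace ℝ X] [CompleteSpace X]
    [NormedAddCommGroup S] [InnerProductSpace ℝ S] [CompleteSpace S]
    (j : X →L[ℝ] H) (D : X →L[ℝ] G) (e : S →L[ℝ] X)
    (hDe : ∀ φ : S, D (e φ) = 0)
    -- discrete spaces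
    (W : ℕ → Submodule ℝ X) (hWfin : ∀ p, FiniteDimensional ℝ (W p))
    (W' : ℕ → Submodule ℝ S) (hW'fin : ∀ p, FiniteDimensional ℝ (W' p))
    (heW : ∀ p : ℕ, ∀ φ ∈ W' p, e φ ∈ W p)
    -- projections
    (π' : ℕ → S →ₗ[ℝ] S) (hπ'mem : ∀ p φ, π' p φ ∈ W' p)
    (hπ'proj : ∀ p : ℕ, ∀ φ ∈ W' p, π' p φ = φ)
    (π : ℕ → X →ₗ[ℝ] X) (hπmem : ∀ p u, π p u ∈ W p)
    (hπproj : ∀ p : ℕ, ∀ w ∈ W p, π p w = w)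
    (hcomm : ∀ (p : ℕ) (φ : S), π p (e φ) = e (π' p φ))
    -- the data of the trick
    (p : ℕ) (u : X) (hu : u ∈ W p)
    (huorth : ∀ ψ ∈ W' p, ⟪j u, j (e ψ)⟫ = 0)
    (ut : X) (σ : S) (hσ : ut - u = e σ)
    (hutorth : ∀ φ : S, ⟪j ut, j (e φ)⟫ = 0) :
    (π p ut - u = e (π' p σ) ∧ π p ut - u ∈ e '' (W' p : Set S)) ∧
    ⟪j (ut - u), j (π p ut - u)⟫ = 0 ∧
    ‖j (ut - u)‖ ≤ ‖j (ut - π p ut)‖ := by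
  have h1 : π p ut - u = e (π' p σ) := by
    rw [← hcomm, ← hσ, map_sub, hπproj p u hu]
  have h2 : ⟪j (ut - u), j (π p ut - u)⟫ = 0 := by
    rw [h1, map_sub, inner_sub_left, hutorth, huorth _ (hπ'mem p σ), sub_zero]
  refine ⟨⟨h1, π' p σ, hπ'mem p σ, h1.symm⟩, h2, ?_⟩
  -- Pythagoras for the decomposition `ut - π_p ut = (ut - u) - (π_p ut - u)`
  have h3 : j (ut - π p ut) = j (ut - u) - j (π p ut - u) := by
    rw [← map_sub, sub_sub_sub_cancel_right]
  have h4 := norm_sub_sq_eq_norm_sq_add_norm_sq_real h2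
  rw [h3]
  nlinarith [norm_nonneg (j (ut - u)), norm_nonneg (j (ut - u) - j (π p ut - u)),
    mul_self_nonneg ‖j (π p ut - u)‖]
end

section
/- Preservation of finite-dimensional invariant spaces by the regularized Poincaré operator (Proposition 10 of the paper): let 1 ≤ ℓ ≤ d and let P ⊆ C(ℝ^d, Λ^ℓ) and Q ⊆ C(ℝ^d, Λ^{ℓ−1}) be finite-dimensional linear subspaces such that (i) P and Q are invariant with respect to dilations and translations, i.e., for all t ∈ ℝ and a ∈ ℝ^d, u ∈ P implies (x ↦ u(t x + a)) ∈ P, and likewise for Q; and (ii) the interior-product map u ↦ (x ↦ x ⌟ u(x)) sends P into Q. Then R_ℓ u ∈ Q for every u ∈ P. -/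
/-!
Dilations and translations only recombine finitely many functions of `P` and `Q`, so the two
integrals in the definition of `R_ℓ` are taken inside finite-dimensional spaces of functions. Such
spaces are stable under pointwise Bochner integration over a parameter
(`integral_mem_of_finiteDimensional`): the coordinates with respect to a basis are linear
combinations of functionals `w ↦ φ (w x)`, hence integrable in the parameter whenever the family is
pointwise integrable, and the integral is the combination of the basis with the integrated
coordinates.

For fixed `a`, this puts `y ↦ ∫₀¹ t^m u(a + t y) dt` into `P`; contracting with `y` gives an element
of `Q`, and the translation `y = x - a` shows `R_{ℓ,a} u ∈ Q` (`poincareOp_mem`). Since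
`a ↦ θ(a) (R_{ℓ,a} u)(x)` is continuous with compact support, integrating over `a` stays in `Q`.
-/

open MeasureTheory

noncomputable section

abbrev Euc (dim : ℕ) := EuclideanSpace ℝ (Fin dim)

/-- ℓ-linear forms on ℝ^dim (the alternating ones model values of differential ℓ-forms). -/
abbrev Form (dim ℓ : ℕ) := ContinuousMultilinearMap ℝ (fun _ : Fin ℓ => Euc dim) ℝ

/-- The alternating property. -/
def IsAlternatingForm {dim ℓ : ℕ} (ω : Form dim ℓ) : Prop :=
  ∀ (w : Fin ℓ → Euc dim) (i j : Fin ℓ), w i = w j → i ≠ j → ω w = 0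

/-- The interior product `v ⌟ ω`. -/
def interiorProduct {dim m : ℕ} (v : Euc dim) (ω : Form dim (m + 1)) : Form dim m :=
  ω.curryLeft v

/-- The Poincaré operator `R_{ℓ,a}` (here `ℓ = m + 1`):
`(R_{ℓ,a} u)(x) = (x − a) ⌟ ∫₀¹ t^{ℓ−1} u(a + t(x − a)) dt`. -/
def poincareOp {dim m : ℕ} (a : Euc dim) (u : Euc dim → Form dim (m + 1))
    (x : Euc dim) : Form dim m :=
  interiorProduct (x - a) (∫ t in (0:ℝ)..1, (t ^ m) • u (a + t • (x - a)))

/-- The regularized Poincaré operator `R_ℓ` (here `ℓ = m + 1`):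
`(R_ℓ u)(x) = ∫ θ(a) (R_{ℓ,a} u)(x) da`. -/
def regPoincareOp {dim m : ℕ} (θ : Euc dim → ℝ) (u : Euc dim → Form dim (m + 1))
    (x : Euc dim) : Form dim m :=
  ∫ a : Euc dim, θ a • poincareOp a u x

/-- A finite-dimensional space of vector-valued functions contains the pointwise integral of any
pointwise integrable family of its members. No measurability in the function variable is needed:
the coordinate functionals are spanned by evaluations. -/
theorem integral_mem_of_finiteDimensional {X E S : Type*} [NormedAddCommGroup E]
    [NormedSpace ℝ E] [CompleteSpace E] [MeasurableSpace S] (μ : Measure S)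
    (W : Submodule ℝ (X → E)) [FiniteDimensional ℝ W] (f : S → X → E)
    (hf : ∀ s, f s ∈ W) (hint : ∀ x, Integrable (fun s => f s x) μ) :
    (fun x => ∫ s, f s x ∂μ) ∈ W := by
  let F : S → W := fun s => ⟨f s, hf s⟩
  let ev : X × StrongDual ℝ E → Module.Dual ℝ W := fun p =>
    p.2.toLinearMap ∘ₗ LinearMap.proj p.1 ∘ₗ W.subtype
  have hspan : Submodule.span ℝ (Set.range ev) = ⊤ := by
    refine Submodule.span_eq_top_of_ne_zero ?_
    intro z hz
    have hz' : (z : X → E) ≠ 0 := fun h => hz (Subtype.ext h)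
    obtain ⟨x, hx⟩ := Function.ne_iff.1 hz'
    obtain ⟨φ, hφ⟩ := SeparatingDual.exists_ne_zero (R := ℝ) hx
    exact ⟨ev (x, φ), ⟨_, rfl⟩, hφ⟩
  have hdual : ∀ c : Module.Dual ℝ W, Integrable (fun s => c (F s)) μ := by
    intro c
    have hc : c ∈ Submodule.span ℝ (Set.range ev) := hspan ▸ Submodule.mem_top
    induction hc using Submodule.span_induction with
    | mem c hc =>
      obtain ⟨⟨x, φ⟩, rfl⟩ := hc
      exact φ.integrable_comp (hint x)
    | zero => simp
    | add c d _ _ hc hd => exact hc.add hd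
    | smul r c _ hc => exact hc.smul r
  let b := Module.finBasis ℝ W
  have key : (fun x => ∫ s, f s x ∂μ) =
      ∑ i, (∫ s, b.coord i (F s) ∂μ) • (b i : X → E) := by
    funext x
    have hrepr : ∀ s, f s x = ∑ i, b.coord i (F s) • (b i : X → E) x := by
      intro s
      have h := congrArg (fun w : W => (w : X → E) x) (b.sum_repr (F s))
      have h' : (∑ i, b.repr (F s) i • b i : W).1 x = f s x := h
      rw [← h']
      simp only [AddSubmonoidClass.coe_finsetSum, Submodule.coe_smul, Finset.sum_apply,
        Pi.smul_apply, Module.Basis.coord_apply]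
    simp_rw [hrepr]
    rw [integral_finsetSum _ fun i _ => (hdual (b.coord i)).smul_const _]
    simp only [Finset.sum_apply, Pi.smul_apply]
    exact Finset.sum_congr rfl fun i _ => integral_smul_const _ _
  rw [key]
  exact W.sum_mem fun i _ => W.smul_mem _ (b i).2

/-- `R_{ℓ,a}` maps `P` into `Q`. -/
theorem poincareOp_mem {dim m : ℕ}
    (P : Submodule ℝ (Euc dim → Form dim (m + 1)))
    (Q : Submodule ℝ (Euc dim → Form dim m)) [FiniteDimensional ℝ P]
    (hPcont : ∀ u ∈ P, Continuous u)
    (hPinv : ∀ (t : ℝ) (a : Euc dim), ∀ u ∈ P, (fun x => u (t • x + a)) ∈ P)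
    (hQinv : ∀ (t : ℝ) (a : Euc dim), ∀ u ∈ Q, (fun x => u (t • x + a)) ∈ Q)
    (hint : ∀ u ∈ P, (fun x => interiorProduct x (u x)) ∈ Q)
    (a : Euc dim) (u : Euc dim → Form dim (m + 1)) (hu : u ∈ P) :
    poincareOp a u ∈ Q := by
  have hc := hPcont u hu
  have hv : (fun y : Euc dim => ∫ t in (0:ℝ)..1, (t ^ m) • u (a + t • y)) ∈ P := by
    simp_rw [intervalIntegral.integral_of_le zero_le_one]
    refine integral_mem_of_finiteDimensional _ P (fun t y => (t ^ m) • u (a + t • y)) ?_ ?_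
    · intro t
      have h := P.smul_mem (t ^ m) (hPinv t a u hu)
      simp_rw [add_comm a]
      exact h
    · intro y
      have h : Continuous fun t : ℝ => (t ^ m) • u (a + t • y) := by fun_prop
      exact (h.intervalIntegrable 0 1).1
  have h := hQinv 1 (-a) _ (hint _ hv)
  simp only [one_smul, ← sub_eq_add_neg] at h
  exact h

theorem continuous_poincareOp {dim m : ℕ} (u : Euc dim → Form dim (m + 1))
    (hu : Continuous u) (x : Euc dim) : Continuous fun a => poincareOp a u x := by
  have hv : Continuous fun a : Euc dim =>
      ∫ t in (0:ℝ)..1, (t ^ m) • u (a + t • (x - a)) := by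
    apply intervalIntegral.continuous_parametric_intervalIntegral_of_continuous'
    fun_prop
  have hcurry : Continuous fun a : Euc dim =>
      (∫ t in (0:ℝ)..1, (t ^ m) • u (a + t • (x - a))).curryLeft :=
    (continuousMultilinearCurryLeftEquiv ℝ (fun _ : Fin (m + 1) => Euc dim) ℝ).continuous.comp hv
  exact hcurry.clm_apply (continuous_const.sub continuous_id)

/-- The regularized Poincaré operator maps a dilation- and
translation-invariant finite-dimensional space `P` of `ℓ`-forms into a space `Q` of
`(ℓ−1)`-forms, provided the interior product `u ↦ (x ↦ x ⌟ u(x))` maps `P` into `Q`.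
(Proposition 10 of the paper; here `ℓ = m + 1` with `1 ≤ ℓ ≤ dim`.) -/
theorem regPoincare_preserves_invariant_spaces
    {dim m : ℕ} (hℓ : m + 1 ≤ dim)
    (θ : Euc dim → ℝ) (hθc : Continuous θ) (hθs : HasCompactSupport θ)
    (hθ1 : ∫ a : Euc dim, θ a = 1)
    (P : Submodule ℝ (Euc dim → Form dim (m + 1)))
    (Q : Submodule ℝ (Euc dim → Form dim m))
    (hPfin : FiniteDimensional ℝ P) (hQfin : FiniteDimensional ℝ Q)
    (hPcont : ∀ u ∈ P, Continuous u) (hQcont : ∀ u ∈ Q, Continuous u)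
    (hPalt : ∀ u ∈ P, ∀ x, IsAlternatingForm (u x))
    (hQalt : ∀ u ∈ Q, ∀ x, IsAlternatingForm (u x))
    -- invariance of `P` and `Q` under dilations and translations
    (hPinv : ∀ (t : ℝ) (a : Euc dim), ∀ u ∈ P, (fun x => u (t • x + a)) ∈ P)
    (hQinv : ∀ (t : ℝ) (a : Euc dim), ∀ u ∈ Q, (fun x => u (t • x + a)) ∈ Q)
    -- the interior product maps `P` into `Q`
    (hint : ∀ u ∈ P, (fun x => interiorProduct x (u x)) ∈ Q) :
    ∀ u ∈ P, (fun x => regPoincareOp θ u x) ∈ Q := by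
  intro u hu
  refine integral_mem_of_finiteDimensional volume Q (fun a x => θ a • poincareOp a u x) ?_ ?_
  · exact fun a => Q.smul_mem (θ a) (poincareOp_mem P Q hPcont hPinv hQinv hint a u hu)
  · intro x
    exact (hθc.smul (continuous_poincareOp u (hPcont u hu) x)).integrable_of_hasCompactSupport
      hθs.smul_right

end
end
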